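/- arXiv:2406.19151 — 2 statements merged into one kernel-verified Lean document; each statement's English description precedes it below -/
import Mathlib

section
/- Let G be a finite commutative group and let a, b ∈ G be such that the subgroup generated by {a, b} is all of G and (orderOf a) · (orderOf b) = |G|. Then the map Fin (orderOf a) × Fin (orderOf b) → G given by (i, j) ↦ a^i · b^j is a bijection; in particular G is isomorphic to the direct product of the cyclic groups generated by a and by b. -/
section Complement

variable {G : Type*} [Group G]

open scoped Pointwise in
theorem isComplement_of_mul_eq_univ_of_card_mul [Finite G] {S T : Set G}
    (hmul : S * T = Set.univ) (hcard : Nat.card S * Nat.card T = Nat.card G) :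
    Subgroup.IsComplement S T := by
  refine (Nat.bijective_iff_surjective_and_card _).mpr ⟨fun g => ?_, ?_⟩
  · obtain ⟨s, hs, t, ht, hst⟩ := Set.mem_mul.mp (hmul ▸ Set.mem_univ g)
    exact ⟨(⟨s, hs⟩, ⟨t, ht⟩), hst⟩
  · rw [Nat.card_prod, hcard]

theorem isComplement'_of_sup_eq_top_of_card_mul [Finite G] {H K : Subgroup G} [K.Normal]
    (hsup : H ⊔ K = ⊤) (hcard : Nat.card H * Nat.card K = Nat.card G) :
    H.IsComplement' K :=
  isComplement_of_mul_eq_univ_of_card_mul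
    (by rw [← Subgroup.mul_normal, hsup, Subgroup.coe_top]) hcard

/-- A group is the internal direct product of two complementary subgroups that commute
elementwise; the isomorphism multiplies the two components. -/
noncomputable def prodMulEquivOfIsComplement' {H K : Subgroup G} (h : H.IsComplement' K)
    (hcomm : ∀ (x : H) (y : K), Commute (x : G) y) : H × K ≃* G :=
  MulEquiv.ofBijective (H.subtype.noncommCoprod K.subtype hcomm) h

end Complement

section Cyclic

variable {G : Type*} [Group G] {a b : G}

theorem zpowers_sup_zpowers_eq_closure_pair (a b : G) :
    Subgroup.zpowers a ⊔ Subgroup.zpowers b = Subgroup.closure {a, b} := by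
  rw [Subgroup.zpowers_eq_closure, Subgroup.zpowers_eq_closure, ← Subgroup.closure_union,
    Set.singleton_union]

theorem bijective_pow_mul_pow_iff_isComplement'_zpowers (ha : IsOfFinOrder a)
    (hb : IsOfFinOrder b) :
    Function.Bijective
        (fun p : Fin (orderOf a) × Fin (orderOf b) => a ^ (p.1 : ℕ) * b ^ (p.2 : ℕ)) ↔
      (Subgroup.zpowers a).IsComplement' (Subgroup.zpowers b) :=
  ((finEquivZPowers ha).prodCongr (finEquivZPowers hb)).bijective_comp
    fun x : Subgroup.zpowers a × Subgroup.zpowers b => (x.1 : G) * x.2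

theorem isComplement'_zpowers_of_closure_pair_eq_top [Finite G] [(Subgroup.zpowers b).Normal]
    (hgen : Subgroup.closure {a, b} = ⊤) (hord : orderOf a * orderOf b = Nat.card G) :
    (Subgroup.zpowers a).IsComplement' (Subgroup.zpowers b) :=
  isComplement'_of_sup_eq_top_of_card_mul
    (by rw [zpowers_sup_zpowers_eq_closure_pair, hgen])
    (by rw [Nat.card_zpowers, Nat.card_zpowers, hord])

end Cyclic

/-- If `a, b` generate a finite commutative group `G` and
`orderOf a * orderOf b = |G|`, then `(i, j) ↦ a^i b^j` is a bijection
`Fin (orderOf a) × Fin (orderOf b) → G`; in particular `G` is isomorphic to the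
direct product of the cyclic subgroups generated by `a` and by `b`. -/
theorem stmt4 {G : Type*} [CommGroup G] [Fintype G] (a b : G)
    (hgen : Subgroup.closure ({a, b} : Set G) = ⊤)
    (hord : orderOf a * orderOf b = Fintype.card G) :
    Function.Bijective
      (fun p : Fin (orderOf a) × Fin (orderOf b) => a ^ (p.1 : ℕ) * b ^ (p.2 : ℕ)) ∧
    Nonempty ((↥(Subgroup.zpowers a) × ↥(Subgroup.zpowers b)) ≃* G) := by
  have hcompl : (Subgroup.zpowers a).IsComplement' (Subgroup.zpowers b) :=
    isComplement'_zpowers_of_closure_pair_eq_top hgen (hord.trans Fintype.card_eq_nat_card)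
  exact ⟨(bijective_pow_mul_pow_iff_isComplement'_zpowers (isOfFinOrder_of_finite a)
      (isOfFinOrder_of_finite b)).mpr hcompl,
    ⟨prodMulEquivOfIsComplement' hcompl fun x y => Commute.all (x : G) y⟩⟩
end

section
/- Let l = 3 and m = 5, and over 𝔽₂ set A = x + z⁴ and B = x + y² + z² (15×15 matrices). Then dim(ker A ∩ ker B) = 2, i.e. the 𝔽₂-dimension of the intersection of the kernels of the linear maps v ↦ A·v and v ↦ B·v equals 2; hence the associated trivariate bicycle code encodes k = 2·dim(ker A ∩ ker B) = 4 logical qubits into n = 2lm = 30 physical qubits. -/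
open Kronecker

/-- The `n × n` cyclic shift matrix over `𝔽₂`. -/
def cyclicShift (n : ℕ) : Matrix (Fin n) (Fin n) (ZMod 2) :=
  Matrix.of fun i j => if (j : ℕ) = ((i : ℕ) + 1) % n then 1 else 0

/-- `x = S_3 ⊗ I_5`. -/
def xM : Matrix (Fin 3 × Fin 5) (Fin 3 × Fin 5) (ZMod 2) :=
  cyclicShift 3 ⊗ₖ (1 : Matrix (Fin 5) (Fin 5) (ZMod 2))

/-- `y = I_3 ⊗ S_5`. -/
def yM : Matrix (Fin 3 × Fin 5) (Fin 3 × Fin 5) (ZMod 2) :=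
  (1 : Matrix (Fin 3) (Fin 3) (ZMod 2)) ⊗ₖ cyclicShift 5

/-- `z = S_3 ⊗ S_5`. -/
def zM : Matrix (Fin 3 × Fin 5) (Fin 3 × Fin 5) (ZMod 2) :=
  cyclicShift 3 ⊗ₖ cyclicShift 5

/-- `A = x + z⁴` of the weight-5 `[[30,4,5]]` code. -/
def Amat : Matrix (Fin 3 × Fin 5) (Fin 3 × Fin 5) (ZMod 2) := xM + zM ^ 4

/-- `B = x + y² + z²` of the weight-5 `[[30,4,5]]` code. -/
def Bmat : Matrix (Fin 3 × Fin 5) (Fin 3 × Fin 5) (ZMod 2) := xM + yM ^ 2 + zM ^ 2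

open scoped Matrix

/-
Write `T g` for translation by `g` on functions. The matrices `x`, `y`, `z` are translations for the
group `Fin 3 × Fin 5`, and `A = T (1, 0) + T (1, 4)`. In characteristic two `A v = 0` therefore says
that `v` has period `(0, 4)`; as `4` generates the second factor, `v` depends on its first
coordinate only. On functions `f` of the first coordinate, `B` acts as the sum `T 1 + T 0 + T 2` of
all translations of `Fin 3`, so it kills `f` exactly when the values of `f` sum to zero: a
hyperplane in a space of dimension three.
-/

section TranslationMatrix

variable {G H : Type*} [AddGroup G] [AddGroup H] [DecidableEq G] [DecidableEq H]

/-- The matrix of the translation operator `v ↦ (p ↦ v (p + g))` on functions on `G`. It serves to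
express the monomials in `x`, `y`, `z` through elements of the group `Fin 3 × Fin 5`. -/
def translationMatrix (R : Type*) [Zero R] [One R] (g : G) : Matrix G G R :=
  (Equiv.addRight g).permMatrix R

theorem translationMatrix_apply {R : Type*} [Zero R] [One R] (g p q : G) :
    translationMatrix R g p q = if p + g = q then 1 else 0 := by
  simp [translationMatrix, PEquiv.toMatrix_apply, eq_comm]

theorem translationMatrix_zero {R : Type*} [Zero R] [One R] :
    translationMatrix R (0 : G) = 1 := by
  ext p q
  simp [translationMatrix_apply, Matrix.one_apply]

theorem translationMatrix_kronecker {R : Type*} [MulZeroOneClass R] (g : G) (h : H) :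
    translationMatrix R g ⊗ₖ translationMatrix R h = translationMatrix R (g, h) := by
  ext ⟨p, q⟩ ⟨p', q'⟩
  simp [translationMatrix_apply, ← ite_and, and_comm]

variable [Fintype G] [Fintype H]

theorem translationMatrix_mul {R : Type*} [NonAssocSemiring R] (g h : G) :
    translationMatrix R g * translationMatrix R h = translationMatrix R (g + h) := by
  simp only [translationMatrix, ← Matrix.permMatrix_mul]
  congr 1
  ext p
  simp [add_assoc]

theorem translationMatrix_pow {R : Type*} [Semiring R] (g : G) (n : ℕ) :
    translationMatrix R g ^ n = translationMatrix R (n • g) := by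
  induction n with
  | zero => rw [pow_zero, zero_nsmul, translationMatrix_zero]
  | succ n ih => rw [pow_succ, ih, translationMatrix_mul, succ_nsmul]

theorem translationMatrix_mulVec_apply {R : Type*} [CommRing R] (g : G) (v : G → R) (p : G) :
    (translationMatrix R g *ᵥ v) p = v (p + g) := by
  simp [translationMatrix, Matrix.permMatrix_mulVec]

theorem translationMatrix_mulVec_comp_fst {R : Type*} [CommRing R] (g : G × H) (f : G → R) :
    translationMatrix R g *ᵥ (f ∘ Prod.fst) = (translationMatrix R g.1 *ᵥ f) ∘ Prod.fst := by
  ext p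
  simp [translationMatrix_mulVec_apply]

theorem sum_translationMatrix_mulVec {R : Type*} [CommRing R] (f : G → R) :
    (∑ g : G, translationMatrix R g) *ᵥ f = Function.const G (∑ g, f g) := by
  ext p
  simp only [Matrix.sum_mulVec, Finset.sum_apply, translationMatrix_mulVec_apply,
    Function.const_apply]
  exact Equiv.sum_comp (Equiv.addLeft p) f

theorem translationMatrix_add_mulVec_eq_zero_iff {R : Type*} [CommRing R] [CharP R 2]
    (g h : G) (v : G → R) :
    (translationMatrix R g + translationMatrix R h) *ᵥ v = 0 ↔
      Function.Periodic v (-g + h) := by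
  simp only [Matrix.add_mulVec, CharTwo.add_eq_zero, funext_iff, translationMatrix_mulVec_apply]
  exact ⟨fun hv p => by simpa [add_assoc] using (hv (p + -g)).symm,
    fun hv p => by simpa [← add_assoc] using (hv (p + g)).symm⟩

end TranslationMatrix

theorem periodic_zero_prod_iff_mem_range_comp_fst {G H α : Type*} [AddGroup G] [AddGroup H]
    {c : H} (hc : AddSubgroup.zmultiples c = ⊤) (v : G × H → α) :
    Function.Periodic v (0, c) ↔ v ∈ Set.range fun f : G → α => f ∘ Prod.fst := by
  constructor
  · intro hv
    refine ⟨fun p => v (p, 0), funext fun ⟨p, q⟩ => ?_⟩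
    obtain ⟨n, rfl⟩ : q ∈ AddSubgroup.zmultiples c := hc ▸ AddSubgroup.mem_top q
    simpa using (hv.zsmul n (p, 0)).symm
  · rintro ⟨f, rfl⟩ p
    simp

theorem finrank_ker_sum_proj_add_one (K ι : Type*) [Field K] [Fintype ι] [Nonempty ι] :
    Module.finrank K (LinearMap.ker (∑ i : ι, LinearMap.proj i : Module.Dual K (ι → K))) + 1 =
      Fintype.card ι := by
  classical
  have sum_proj_ne_zero : (∑ i : ι, LinearMap.proj i : Module.Dual K (ι → K)) ≠ 0 := by
    intro h
    obtain ⟨i⟩ := ‹Nonempty ι›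
    simpa using LinearMap.congr_fun h (Pi.single i 1)
  rw [Module.Dual.finrank_ker_add_one_of_ne_zero sum_proj_ne_zero,
    Module.finrank_fintype_fun_eq_card]

theorem cyclicShift_eq_translationMatrix (n : ℕ) [NeZero n] :
    cyclicShift n = translationMatrix (ZMod 2) (1 : Fin n) := by
  ext i j
  simp [cyclicShift, translationMatrix_apply, Fin.ext_iff, Fin.val_add, eq_comm]

theorem xM_eq_translationMatrix : xM = translationMatrix (ZMod 2) (1, 0) := by
  rw [xM, cyclicShift_eq_translationMatrix, ← translationMatrix_zero, translationMatrix_kronecker]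

theorem yM_eq_translationMatrix : yM = translationMatrix (ZMod 2) (0, 1) := by
  rw [yM, cyclicShift_eq_translationMatrix, ← translationMatrix_zero, translationMatrix_kronecker]

theorem zM_eq_translationMatrix : zM = translationMatrix (ZMod 2) (1, 1) := by
  simp only [zM, cyclicShift_eq_translationMatrix, translationMatrix_kronecker]

theorem Amat_eq_translationMatrix_add :
    Amat = translationMatrix (ZMod 2) (1, 0) + translationMatrix (ZMod 2) (1, 4) := by
  have four_nsmul : 4 • ((1, 1) : Fin 3 × Fin 5) = (1, 4) := rfl
  rw [Amat, xM_eq_translationMatrix, zM_eq_translationMatrix, translationMatrix_pow, four_nsmul]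

theorem Bmat_eq_translationMatrix_add :
    Bmat = translationMatrix (ZMod 2) (1, 0) + translationMatrix (ZMod 2) (0, 2) +
      translationMatrix (ZMod 2) (2, 2) := by
  have two_nsmul_y : 2 • ((0, 1) : Fin 3 × Fin 5) = (0, 2) := rfl
  have two_nsmul_z : 2 • ((1, 1) : Fin 3 × Fin 5) = (2, 2) := rfl
  rw [Bmat, xM_eq_translationMatrix, yM_eq_translationMatrix, zM_eq_translationMatrix,
    translationMatrix_pow, translationMatrix_pow, two_nsmul_y, two_nsmul_z]

theorem ker_Amat_eq_range_funLeft_fst :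
    LinearMap.ker Amat.mulVecLin =
      LinearMap.range (LinearMap.funLeft (ZMod 2) (ZMod 2) (Prod.fst : Fin 3 × Fin 5 → Fin 3)) := by
  have : Fact (Nat.Prime 5) := ⟨by norm_num⟩
  have four_generates : AddSubgroup.zmultiples (4 : Fin 5) = ⊤ :=
    zmultiples_eq_top_of_prime_card (p := 5) (Nat.card_fin 5) (by decide)
  ext v
  calc Amat *ᵥ v = 0
    _ ↔ Function.Periodic v (0, 4) := by
      rw [Amat_eq_translationMatrix_add]
      exact translationMatrix_add_mulVec_eq_zero_iff (1, 0) (1, 4) v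
    _ ↔ v ∈ Set.range fun f : Fin 3 → ZMod 2 => f ∘ Prod.fst :=
      periodic_zero_prod_iff_mem_range_comp_fst four_generates v

theorem Bmat_mulVec_comp_fst (f : Fin 3 → ZMod 2) :
    Bmat *ᵥ (f ∘ Prod.fst) = Function.const _ (∑ i, f i) := by
  have sum_translations : translationMatrix (ZMod 2) (1 : Fin 3) + translationMatrix (ZMod 2) 0 +
      translationMatrix (ZMod 2) 2 = ∑ i : Fin 3, translationMatrix (ZMod 2) i := by
    rw [Fin.sum_univ_three, add_comm (translationMatrix _ 1)]
  calc Bmat *ᵥ (f ∘ Prod.fst)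
    _ = ((∑ i : Fin 3, translationMatrix (ZMod 2) i) *ᵥ f) ∘ Prod.fst := by
      simp only [Bmat_eq_translationMatrix_add, ← sum_translations, Matrix.add_mulVec,
        translationMatrix_mulVec_comp_fst]
      rfl
    _ = Function.const _ (∑ i, f i) := by
      rw [sum_translationMatrix_mulVec, Function.const_comp]

theorem ker_Amat_inf_ker_Bmat_eq_map :
    LinearMap.ker Amat.mulVecLin ⊓ LinearMap.ker Bmat.mulVecLin =
      (LinearMap.ker (∑ i, LinearMap.proj i : Module.Dual (ZMod 2) (Fin 3 → ZMod 2))).map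
        (LinearMap.funLeft (ZMod 2) (ZMod 2) Prod.fst) := by
  rw [ker_Amat_eq_range_funLeft_fst, ← Submodule.map_comap_eq]
  congr 1
  ext f
  have Bmat_lift : Bmat *ᵥ LinearMap.funLeft (ZMod 2) (ZMod 2) Prod.fst f =
      Function.const _ (∑ i, f i) := Bmat_mulVec_comp_fst f
  simp [Bmat_lift, funext_iff]

/-- For the weight-5 `[[30,4,5]]` trivariate bicycle code (`l = 3`, `m = 5`,
`A = x + z⁴`, `B = x + y² + z²`), `dim(ker A ∩ ker B) = 2`, so the code encodes
`k = 4` logical qubits into `n = 30` physical qubits. -/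
theorem stmt11 :
    Module.finrank (ZMod 2)
      ↥(LinearMap.ker Amat.mulVecLin ⊓ LinearMap.ker Bmat.mulVecLin) = 2 := by
  have lift_injective := LinearMap.funLeft_injective_of_surjective (ZMod 2) (ZMod 2)
    (Prod.fst : Fin 3 × Fin 5 → Fin 3) Prod.fst_surjective
  rw [ker_Amat_inf_ker_Bmat_eq_map,
    ← (Submodule.equivMapOfInjective _ lift_injective _).finrank_eq]
  exact Nat.succ_injective (finrank_ker_sum_proj_add_one (ZMod 2) (Fin 3))
end
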